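/- For every τ ∈ E_D, the one-sided limit lim_{w→0⁺} (F_{1−k,D,𝒜}(τ + iw) + F_{1−k,D,𝒜}(τ − iw)) (w real, w > 0) exists and F_{1−k,D,𝒜}(τ) = (1/2)·lim_{w→0⁺} (F_{1−k,D,𝒜}(τ + iw) + F_{1−k,D,𝒜}(τ − iw)). -/

import Mathlib

noncomputable section

open MeasureTheory

/-- The set of integral binary quadratic forms `[a,b,c]` of discriminant `D`. -/
def QD (D : ℤ) : Set (ℤ × ℤ × ℤ) := {q | q.2.1 ^ 2 - 4 * q.1 * q.2.2 = D}

/-- `Q(τ,1) = a τ² + b τ + c`. -/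
def Qval (q : ℤ × ℤ × ℤ) (τ : ℂ) : ℂ :=
  (q.1 : ℂ) * τ ^ 2 + (q.2.1 : ℂ) * τ + (q.2.2 : ℂ)

/-- `a|τ|² + b x + c` where `τ = x + iy`. -/
def Qell (q : ℤ × ℤ × ℤ) (τ : ℂ) : ℝ :=
  (q.1 : ℝ) * Complex.normSq τ + (q.2.1 : ℝ) * τ.re + (q.2.2 : ℝ)

/-- `ψ(v) = (1/2) ∫₀ᵛ u^(k-3/2) (1-u)^(-1/2) du`. -/
def psi (k : ℕ) (v : ℝ) : ℝ :=
  (1 / 2) * ∫ u in (0:ℝ)..v, u ^ ((k : ℝ) - 3 / 2) * (1 - u) ^ (-(1:ℝ) / 2)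

/-- real power of the integer `D`, as a complex number. -/
def Dpow (D : ℤ) (e : ℝ) : ℂ := (((D : ℝ) ^ e : ℝ) : ℂ)

/-- The summand of the series defining `F_{1-k,D}`. -/
def Fsummand (k : ℕ) (D : ℤ) (τ : ℂ) (q : ℤ × ℤ × ℤ) : ℂ :=
  ((Real.sign (Qell q τ) : ℝ) : ℂ) * Qval q τ ^ (k - 1) *
    ((psi k ((D : ℝ) * τ.im ^ 2 / Complex.normSq (Qval q τ)) : ℝ) : ℂ)

/-- `F_{1-k,D}`. -/
def F (k : ℕ) (D : ℤ) (τ : ℂ) : ℂ :=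
  (Dpow D (1 / 2 - (k : ℝ)) / (((Nat.choose (2 * k - 2) (k - 1) : ℝ) * Real.pi : ℝ) : ℂ)) *
    ∑' q : QD D, Fsummand k D τ (q : ℤ × ℤ × ℤ)

/-- `f_{k,D}`. -/
def fkD (k : ℕ) (D : ℤ) (τ : ℂ) : ℂ :=
  (Dpow D ((k : ℝ) - 1 / 2) / (((Nat.choose (2 * k - 2) (k - 1) : ℝ) * Real.pi : ℝ) : ℂ)) *
    ∑' q : QD D, Qval (q : ℤ × ℤ × ℤ) τ ^ (-(k : ℤ))

/-- Action of `SL₂(ℤ)` on binary quadratic forms: `(Q ∘ γ)(X,Y) = Q(pX+qY, rX+sY)`. -/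
def QAct (q : ℤ × ℤ × ℤ) (γ : Matrix.SpecialLinearGroup (Fin 2) ℤ) : ℤ × ℤ × ℤ :=
  (q.1 * (γ.1 0 0) ^ 2 + q.2.1 * (γ.1 0 0) * (γ.1 1 0) + q.2.2 * (γ.1 1 0) ^ 2,
   2 * q.1 * (γ.1 0 0) * (γ.1 0 1) + q.2.1 * ((γ.1 0 0) * (γ.1 1 1) + (γ.1 0 1) * (γ.1 1 0))
     + 2 * q.2.2 * (γ.1 1 0) * (γ.1 1 1),
   q.1 * (γ.1 0 1) ^ 2 + q.2.1 * (γ.1 0 1) * (γ.1 1 1) + q.2.2 * (γ.1 1 1) ^ 2)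

/-- A narrow class: an orbit of the `SL₂(ℤ)`-action on `QD D`. -/
def IsNarrowClass (D : ℤ) (𝒜 : Set (ℤ × ℤ × ℤ)) : Prop :=
  ∃ q₀ ∈ QD D, 𝒜 = {q | ∃ γ : Matrix.SpecialLinearGroup (Fin 2) ℤ, QAct q₀ γ = q}

/-- `F_{1-k,D,𝒜}`. -/
def FA (k : ℕ) (D : ℤ) (𝒜 : Set (ℤ × ℤ × ℤ)) (τ : ℂ) : ℂ :=
  ((-1 : ℂ) ^ k * Dpow D (1 / 2 - (k : ℝ)) /
      (((Nat.choose (2 * k - 2) (k - 1) : ℝ) * Real.pi : ℝ) : ℂ)) *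
    ∑' q : 𝒜, Fsummand k D τ (q : ℤ × ℤ × ℤ)

/-- `f_{k,D,𝒜}`. -/
def fA (k : ℕ) (D : ℤ) (𝒜 : Set (ℤ × ℤ × ℤ)) (τ : ℂ) : ℂ :=
  ((-1 : ℂ) ^ k * Dpow D ((k : ℝ) - 1 / 2) /
      (((Nat.choose (2 * k - 2) (k - 1) : ℝ) * Real.pi : ℝ) : ℂ)) *
    ∑' q : 𝒜, Qval (q : ℤ × ℤ × ℤ) τ ^ (-(k : ℤ))

/-- Partial derivative in the real direction `x`. -/
def dxx (G : ℂ → ℂ) (τ : ℂ) : ℂ :=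
  deriv (fun x : ℝ => G ((x : ℂ) + (τ.im : ℂ) * Complex.I)) τ.re

/-- Partial derivative in the imaginary direction `y`. -/
def dyy (G : ℂ → ℂ) (τ : ℂ) : ℂ :=
  deriv (fun y : ℝ => G ((τ.re : ℂ) + (y : ℂ) * Complex.I)) τ.im

/-- Wirtinger derivative `∂/∂τ̄ = (1/2)(∂/∂x + i ∂/∂y)`. -/
def wirDbar (G : ℂ → ℂ) (τ : ℂ) : ℂ := (dxx G τ + Complex.I * dyy G τ) / 2

/-- Wirtinger derivative `∂/∂τ = (1/2)(∂/∂x - i ∂/∂y)`. -/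
def wirD (G : ℂ → ℂ) (τ : ℂ) : ℂ := (dxx G τ - Complex.I * dyy G τ) / 2

/-- The operator `ξ_{2-2k}(G)(τ) = 2 i y^{2-2k} conj(∂G/∂τ̄)`. -/
def xiOp (k : ℕ) (G : ℂ → ℂ) (τ : ℂ) : ℂ :=
  2 * Complex.I * (τ.im : ℂ) ^ ((2 : ℤ) - 2 * (k : ℤ)) * (starRingEnd ℂ) (wirDbar G τ)

/-- The operator `𝒟 = (1/(2πi)) ∂/∂τ`. -/
def Dop (G : ℂ → ℂ) : ℂ → ℂ := fun τ => (1 / (2 * (Real.pi : ℂ) * Complex.I)) * wirD G τ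

/-- The weight `2-2k` hyperbolic Laplacian. -/
def DeltaOp (k : ℕ) (G : ℂ → ℂ) (τ : ℂ) : ℂ :=
  -(τ.im : ℂ) ^ 2 * (dxx (fun z => dxx G z) τ + dyy (fun z => dyy G z) τ)
    + Complex.I * ((2 : ℂ) - 2 * (k : ℂ)) * (τ.im : ℂ) * (dxx G τ + Complex.I * dyy G τ)

/-- `φ(v) = ∫₀ᵛ sin(u)^{2k-2} du`. -/
def phi (k : ℕ) (v : ℝ) : ℝ := ∫ u in (0:ℝ)..v, Real.sin u ^ (2 * k - 2)

/-- `φ̂(τ) = τ^{k-1} sgn(x) φ(arctan|y/x|)`, with value `0` when `x = 0`. -/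
def phiHat (k : ℕ) (τ : ℂ) : ℂ :=
  τ ^ (k - 1) * ((Real.sign τ.re : ℝ) : ℂ) *
    ((phi k (Real.arctan |τ.im / τ.re|) : ℝ) : ℂ)

/-- The non-holomorphic Eichler integral
`f^*(τ) = (2i)^{1-2k} ∫_{-τ̄}^{i∞} conj(f(-z̄)) (z+τ)^{2k-2} dz`,
parametrized along the vertical path `z = -τ̄ + it`, `t ∈ (0,∞)`. -/
def fstar (k : ℕ) (f : ℂ → ℂ) (τ : ℂ) : ℂ :=
  (2 * Complex.I) ^ ((1 : ℤ) - 2 * (k : ℤ)) * Complex.I *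
    ∫ t in Set.Ioi (0 : ℝ), (starRingEnd ℂ) (f (τ + (t : ℂ) * Complex.I)) *
      (((2 * τ.im + t : ℝ) : ℂ) * Complex.I) ^ (2 * k - 2)

/-- `a : ℕ → ℂ` is the sequence of Fourier coefficients of `f` (with `a n` the
coefficient of `e^{2πi(n+1)τ}`). -/
def HasFourier (a : ℕ → ℂ) (f : ℂ → ℂ) : Prop :=
  ∀ τ : ℂ, 0 < τ.im →
    f τ = ∑' n : ℕ, a n * Complex.exp (2 * (Real.pi : ℂ) * Complex.I * ((n : ℂ) + 1) * τ)

/-- The holomorphic Eichler integral `ℰ_f(τ) = ∑_{n≥1} (a_n/n^{2k-1}) e^{2πinτ}`. -/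
def EichlerE (k : ℕ) (a : ℕ → ℂ) (τ : ℂ) : ℂ :=
  ∑' n : ℕ, a n / ((n : ℂ) + 1) ^ (2 * k - 1) *
    Complex.exp (2 * (Real.pi : ℂ) * Complex.I * ((n : ℂ) + 1) * τ)

/-- `r_{a,b}(𝒜) = 1_{[Q_{a,b} ∈ 𝒜]} + (-1)^k 1_{[-Q_{a,b} ∈ 𝒜]}`. -/
def rab (k : ℕ) (D : ℤ) (𝒜 : Set (ℤ × ℤ × ℤ)) (a b : ℤ) : ℝ :=
  Set.indicator 𝒜 1 (a, b, (b ^ 2 - D) / (4 * a)) +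
    (-1 : ℝ) ^ k * Set.indicator 𝒜 1 (-a, -b, -((b ^ 2 - D) / (4 * a)))

/-- The constant `c_∞(𝒜)`. -/
def cInftyA (k : ℕ) (D : ℤ) (𝒜 : Set (ℤ × ℤ × ℤ)) : ℝ :=
  -(1 / (2 ^ (2 * k - 2) * (2 * (k : ℝ) - 1) * (Nat.choose (2 * k - 2) (k - 1) : ℝ))) *
    ∑' n : ℕ, (1 / ((n : ℝ) + 1) ^ k) *
      ∑ b ∈ Finset.range (2 * (n + 1)),
        if (4 * ((n : ℤ) + 1)) ∣ ((b : ℤ) ^ 2 - D) then rab k D 𝒜 ((n : ℤ) + 1) (b : ℤ) else 0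

/-- The constant `c_∞`. -/
def cInfty (k : ℕ) (D : ℤ) : ℝ :=
  -(1 / (2 ^ (2 * k - 3) * (2 * (k : ℝ) - 1) * (Nat.choose (2 * k - 2) (k - 1) : ℝ))) *
    ∑' n : ℕ, (1 / ((n : ℝ) + 1) ^ k) *
      (((Finset.range (2 * (n + 1))).filter
        (fun b : ℕ => (4 * ((n : ℤ) + 1)) ∣ ((b : ℤ) ^ 2 - D))).card : ℝ)

/-- The weight `2-2k` Hecke operator `T_p`. -/
def heckeT (k : ℕ) (p : ℕ) (g : ℂ → ℂ) (τ : ℂ) : ℂ :=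
  (p : ℂ) ^ ((1 : ℤ) - 2 * (k : ℤ)) * g ((p : ℂ) * τ) +
    (p : ℂ)⁻¹ * ∑ r ∈ Finset.range p, g ((τ + (r : ℂ)) / (p : ℂ))

open scoped Classical in
/-- The symbol `(D|p)`. -/
def legSym (D : ℤ) (p : ℕ) : ℤ :=
  if (p : ℤ) ∣ D then 0
  else if p = 2 then (if D % 8 = 1 ∨ D % 8 = 7 then 1 else -1)
  else if ∃ m : ℤ, (p : ℤ) ∣ (m ^ 2 - D) then 1 else -1

/-- Primitive forms of discriminant `D`. -/
def QDprim (D : ℤ) : Set (ℤ × ℤ × ℤ) :=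
  {q | q.2.1 ^ 2 - 4 * q.1 * q.2.2 = D ∧ Int.gcd q.1 (Int.gcd q.2.1 q.2.2) = 1}

/-- `F'_{1-k,D}`: the sum over primitive forms, with normalization `D^{(1-k)/2}`. -/
def Fprim (k : ℕ) (D : ℤ) (τ : ℂ) : ℂ :=
  (Dpow D ((1 - (k : ℝ)) / 2) / (((Nat.choose (2 * k - 2) (k - 1) : ℝ) * Real.pi : ℝ) : ℂ)) *
    ∑' q : QDprim D, Fsummand k D τ (q : ℤ × ℤ × ℤ)

/-- The root `η_Q = (-b+√D)/(2a)`. -/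
def etaQ (D : ℤ) (q : ℤ × ℤ × ℤ) : ℝ := (-(q.2.1 : ℝ) + Real.sqrt (D : ℝ)) / (2 * (q.1 : ℝ))

/-- The root `η'_Q = (-b-√D)/(2a)`. -/
def etaQ' (D : ℤ) (q : ℤ × ℤ × ℤ) : ℝ := (-(q.2.1 : ℝ) - Real.sqrt (D : ℝ)) / (2 * (q.1 : ℝ))

/-- The scaling matrix `A_Q`. -/
def AQ (D : ℤ) (q : ℤ × ℤ × ℤ) : Matrix (Fin 2) (Fin 2) ℝ :=
  (1 / Real.sqrt |etaQ D q - etaQ' D q|) •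
    !![1, -(etaQ' D q);
       -(Real.sign (etaQ D q - etaQ' D q)), Real.sign (etaQ D q - etaQ' D q) * etaQ D q]

/-- Real matrix associated to an element of `SL₂(ℤ)`. -/
def toR (γ : Matrix.SpecialLinearGroup (Fin 2) ℤ) : Matrix (Fin 2) (Fin 2) ℝ :=
  γ.1.map (fun n => (n : ℝ))

/-- Möbius action of a real `2×2` matrix on `ℂ`. -/
def moeb (g : Matrix (Fin 2) (Fin 2) ℝ) (τ : ℂ) : ℂ :=
  ((g 0 0 : ℝ) * τ + (g 0 1 : ℝ)) / ((g 1 0 : ℝ) * τ + (g 1 1 : ℝ))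

/-- Automorphy factor `j(g,τ) = cτ + d`. -/
def jfac (g : Matrix (Fin 2) (Fin 2) ℝ) (τ : ℂ) : ℂ :=
  ((g 1 0 : ℝ) : ℂ) * τ + ((g 1 1 : ℝ) : ℂ)

/-- `n`-th period `r_n(f) = ∫₀^∞ f(it) tⁿ dt`. -/
def periodR (f : ℂ → ℂ) (n : ℕ) : ℂ :=
  ∫ t in Set.Ioi (0 : ℝ), f ((t : ℂ) * Complex.I) * (t : ℂ) ^ n

/-- The even period polynomial `r⁺(f;X)`. -/
def rPlus (k : ℕ) (f : ℂ → ℂ) : Polynomial ℂ :=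
  ∑ m ∈ Finset.range k,
    Polynomial.C ((-1 : ℂ) ^ m * (Nat.choose (2 * k - 2) (2 * m) : ℂ) * periodR f (2 * m)) *
      Polynomial.X ^ (2 * k - 2 - 2 * m)

end

/-!
On each vertical line `a|τ|² + bx + c` is a quadratic polynomial in `y` without linear term, so
where it vanishes the signs of `Q` at `τ ± iw` cancel for small `w > 0`, whereas elsewhere both
agree with the sign at `τ`. In either case they add up to twice the sign at `τ`, and the remaining
factor of the summand is continuous, so the limit formula holds summand by summand.

It passes to the series by dominated convergence. From `|Q(τ,1)|² = (a|τ|² + bx + c)² + Dy²` and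
`ψ(s²) ≤ s^(2k-1)` the summand at `Q = [a,b,c]` is `O(1 / (1 + b²))`, locally uniformly in `τ`.
Since `a` divides the nonzero integer `b² - D`, at most `2 d(|b² - D|)` forms share the same `b`,
and the divisor bound `d(n) = O(n^ε)` makes the majorant summable.
-/

section DivisorBound

lemma succ_pow_le_factorial_mul_two_pow (m e : ℕ) :
    (e + 1) ^ m ≤ m.factorial * 2 ^ m * 2 ^ e :=
  calc (e + 1) ^ m ≤ (e + 1).ascFactorial m := Nat.pow_succ_le_ascFactorial _ _
    _ = m.factorial * (e + m).choose m := Nat.ascFactorial_eq_factorial_mul_choose _ _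
    _ ≤ m.factorial * 2 ^ (e + m) := by gcongr; exact Nat.choose_le_two_pow _ _
    _ = m.factorial * 2 ^ m * 2 ^ e := by ring

lemma succ_pow_le_pow_of_two_pow_le {m p : ℕ} (hp : 2 ^ m ≤ p) (e : ℕ) :
    (e + 1) ^ m ≤ p ^ e :=
  calc (e + 1) ^ m ≤ (2 ^ e) ^ m := Nat.pow_le_pow_left Nat.lt_two_pow_self m
    _ = (2 ^ m) ^ e := pow_right_comm 2 e m
    _ ≤ p ^ e := Nat.pow_le_pow_left hp e

lemma card_divisors_pow_le (m : ℕ) {n : ℕ} (hn : n ≠ 0) :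
    n.divisors.card ^ m ≤ (m.factorial * 2 ^ m) ^ 2 ^ m * n := by
  set K := m.factorial * 2 ^ m
  have one_le_K : 1 ≤ K := Nat.one_le_iff_ne_zero.mpr (by positivity)
  have local_factor_le : ∀ p ∈ n.primeFactors, (n.factorization p + 1) ^ m ≤
      (if p < 2 ^ m then K else 1) * p ^ n.factorization p := fun p hp => by
    split_ifs with hlt
    · have two_le_p : 2 ≤ p := (Nat.prime_of_mem_primeFactors hp).two_le
      exact (succ_pow_le_factorial_mul_two_pow m _).trans (by gcongr)
    · exact (succ_pow_le_pow_of_two_pow_le (not_lt.mp hlt) _).trans_eq (one_mul _).symm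
  have card_small_primes_le : (n.primeFactors.filter (· < 2 ^ m)).card ≤ 2 ^ m :=
    (Finset.card_le_card fun p hp => Finset.mem_range.mpr (Finset.mem_filter.mp hp).2).trans_eq
      (Finset.card_range _)
  calc n.divisors.card ^ m
      = ∏ p ∈ n.primeFactors, (n.factorization p + 1) ^ m := by
        rw [Nat.card_divisors hn, Finset.prod_pow]
    _ ≤ ∏ p ∈ n.primeFactors, ((if p < 2 ^ m then K else 1) * p ^ n.factorization p) :=
        Finset.prod_le_prod' local_factor_le
    _ = K ^ (n.primeFactors.filter (· < 2 ^ m)).card * n := by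
        rw [Finset.prod_mul_distrib, ← Finset.prod_filter, Finset.prod_const]
        congr 1
        exact Nat.prod_factorization_pow_eq_self hn
    _ ≤ K ^ 2 ^ m * n :=
        Nat.mul_le_mul_right _ (Nat.pow_le_pow_right one_le_K card_small_primes_le)

theorem exists_card_divisors_le_rpow {ε : ℝ} (hε : 0 < ε) :
    ∃ C : ℝ, 0 ≤ C ∧ ∀ n : ℕ, (n.divisors.card : ℝ) ≤ C * (n : ℝ) ^ ε := by
  obtain ⟨m, hm⟩ := exists_nat_ge ε⁻¹
  have m_pos : (0 : ℝ) < m := (inv_pos.mpr hε).trans_le hm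
  have inv_m_le : (m : ℝ)⁻¹ ≤ ε := inv_le_of_inv_le₀ hε hm
  let K : ℝ := (m.factorial * 2 ^ m) ^ 2 ^ m
  have K_nonneg : 0 ≤ K := by positivity
  refine ⟨K ^ (m : ℝ)⁻¹, by positivity, fun n => ?_⟩
  rcases eq_or_ne n 0 with rfl | hn
  · simp only [Nat.divisors_zero, Finset.card_empty, Nat.cast_zero]
    positivity
  have one_le_n : (1 : ℝ) ≤ n := by exact_mod_cast Nat.one_le_iff_ne_zero.mpr hn
  have card_pow_le : (n.divisors.card : ℝ) ^ (m : ℝ) ≤ K * n := by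
    rw [Real.rpow_natCast]
    simp only [K]
    exact_mod_cast card_divisors_pow_le m hn
  calc (n.divisors.card : ℝ) ≤ (K * n) ^ (m : ℝ)⁻¹ :=
        (Real.le_rpow_inv_iff_of_pos (by positivity) (by positivity) m_pos).mpr card_pow_le
    _ = K ^ (m : ℝ)⁻¹ * (n : ℝ) ^ (m : ℝ)⁻¹ := Real.mul_rpow K_nonneg (by positivity)
    _ ≤ K ^ (m : ℝ)⁻¹ * (n : ℝ) ^ ε := by gcongr

end DivisorBound

section Majorant

lemma summable_int_one_add_sq_rpow {r : ℝ} (hr : r < -(1 / 2)) :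
    Summable fun b : ℤ => (1 + (b : ℝ) ^ 2) ^ r := by
  refine Summable.of_norm_bounded_eventually
    (Real.summable_abs_int_rpow (b := -(2 * r)) (by linarith)) ?_
  filter_upwards [Filter.eventually_cofinite_ne 0] with b hb
  have abs_b_pos : 0 < |(b : ℝ)| := abs_pos.mpr (Int.cast_ne_zero.mpr hb)
  calc ‖(1 + (b : ℝ) ^ 2) ^ r‖ = (1 + |(b : ℝ)| ^ 2) ^ r := by
        rw [Real.norm_of_nonneg (by positivity), sq_abs]
    _ ≤ (|(b : ℝ)| ^ 2) ^ r :=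
        Real.rpow_le_rpow_of_nonpos (by positivity) (by linarith) (by linarith)
    _ = |(b : ℝ)| ^ (-(-(2 * r))) := by
        rw [← Real.rpow_natCast, ← Real.rpow_mul abs_b_pos.le, neg_neg, Nat.cast_ofNat]

lemma summable_card_divisors_sq_sub (D : ℤ) :
    Summable fun b : ℤ => ((b ^ 2 - D).divisors.card : ℝ) * (1 / (1 + (b : ℝ) ^ 2)) := by
  obtain ⟨C, C_nonneg, hC⟩ := exists_card_divisors_le_rpow (ε := 1 / 3) (by norm_num)
  have majorant_summable := (summable_int_one_add_sq_rpow (r := 1 / 3 - 1) (by norm_num)).mul_left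
    (2 * C * (1 + |(D : ℝ)|) ^ (1 / 3 : ℝ))
  refine majorant_summable.of_nonneg_of_le (fun b => by positivity) fun b => ?_
  have card_eq : (b ^ 2 - D).divisors.card = 2 * (b ^ 2 - D).natAbs.divisors.card := by
    rw [Int.divisors, Finset.card_disjUnion, Finset.card_map, Finset.card_map, two_mul]
  have natAbs_le : ((b ^ 2 - D).natAbs : ℝ) ≤ (1 + |(D : ℝ)|) * (1 + (b : ℝ) ^ 2) := by
    calc ((b ^ 2 - D).natAbs : ℝ) = |(b : ℝ) ^ 2 - D| := by rw [Nat.cast_natAbs]; push_cast; rfl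
      _ ≤ |(b : ℝ) ^ 2| + |(D : ℝ)| := abs_sub _ _
      _ = (b : ℝ) ^ 2 + |(D : ℝ)| := by rw [abs_of_nonneg (sq_nonneg _)]
      _ ≤ (1 + |(D : ℝ)|) * (1 + (b : ℝ) ^ 2) := by
        linarith [mul_nonneg (abs_nonneg (D : ℝ)) (sq_nonneg (b : ℝ))]
  have one_add_sq_pos : 0 < 1 + (b : ℝ) ^ 2 := by positivity
  calc ((b ^ 2 - D).divisors.card : ℝ) * (1 / (1 + (b : ℝ) ^ 2))
      = 2 * ((b ^ 2 - D).natAbs.divisors.card : ℝ) * (1 / (1 + (b : ℝ) ^ 2)) := by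
        rw [card_eq, Nat.cast_mul, Nat.cast_ofNat]
    _ ≤ 2 * (C * ((1 + |(D : ℝ)|) * (1 + (b : ℝ) ^ 2)) ^ (1 / 3 : ℝ)) *
          (1 / (1 + (b : ℝ) ^ 2)) := by
        gcongr
        exact (hC _).trans (by gcongr)
    _ = 2 * C * (1 + |(D : ℝ)|) ^ (1 / 3 : ℝ) * (1 + (b : ℝ) ^ 2) ^ (1 / 3 - 1 : ℝ) := by
        rw [Real.mul_rpow (by positivity) one_add_sq_pos.le, Real.rpow_sub_one one_add_sq_pos.ne']
        ring

lemma summable_sigma_divisors_sq_sub (D : ℤ) :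
    Summable fun p : (b : ℤ) × (b ^ 2 - D).divisors => 1 / (1 + (p.1 : ℝ) ^ 2) := by
  rw [summable_sigma_of_nonneg fun p => by positivity]
  refine ⟨fun b => Summable.of_finite, (summable_card_divisors_sq_sub D).congr fun b => ?_⟩
  simp only [tsum_fintype, Finset.sum_const, Finset.card_univ, Fintype.card_coe, nsmul_eq_mul]

variable {D : ℤ} {𝒜 : Set (ℤ × ℤ × ℤ)}

lemma QAct_mem_QD {q : ℤ × ℤ × ℤ} (hq : q ∈ QD D) (γ : Matrix.SpecialLinearGroup (Fin 2) ℤ) :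
    QAct q γ ∈ QD D := by
  have det_eq_one := γ.2
  rw [Matrix.det_fin_two] at det_eq_one
  simp only [QD, QAct, Set.mem_ofPred_eq] at hq ⊢
  linear_combination
    hq + (q.2.1 ^ 2 - 4 * q.1 * q.2.2) * (γ.1 0 0 * γ.1 1 1 - γ.1 0 1 * γ.1 1 0 + 1) * det_eq_one

lemma IsNarrowClass.subset_QD (h𝒜 : IsNarrowClass D 𝒜) : 𝒜 ⊆ QD D := by
  obtain ⟨q₀, hq₀, rfl⟩ := h𝒜
  rintro _ ⟨γ, rfl⟩
  exact QAct_mem_QD hq₀ γ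

lemma fst_dvd_sq_sub {q : ℤ × ℤ × ℤ} (hq : q ∈ QD D) : q.1 ∣ q.2.1 ^ 2 - D := by
  have disc_eq : q.2.1 ^ 2 - 4 * q.1 * q.2.2 = D := hq
  exact ⟨4 * q.2.2, by linarith⟩

lemma eq_of_mem_QD_of_fst_eq_of_snd_eq (hDsq : ¬∃ m : ℤ, m ^ 2 = D)
    {q q' : ℤ × ℤ × ℤ} (hq : q ∈ QD D) (hq' : q' ∈ QD D)
    (ha : q.1 = q'.1) (hb : q.2.1 = q'.2.1) : q = q' := by
  have disc_eq : q.2.1 ^ 2 - 4 * q.1 * q.2.2 = D := hq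
  have disc_eq' : q'.2.1 ^ 2 - 4 * q'.1 * q'.2.2 = D := hq'
  have fst_ne_zero : q.1 ≠ 0 := fun h => hDsq ⟨q.2.1, by rw [← disc_eq, h]; ring⟩
  have c_eq : q.2.2 = q'.2.2 := by
    rw [← ha, ← hb] at disc_eq'
    exact mul_left_cancel₀ fst_ne_zero (by linarith)
  exact Prod.ext ha (Prod.ext hb c_eq)

lemma summable_one_div_one_add_sq_of_subset_QD (hDsq : ¬∃ m : ℤ, m ^ 2 = D)
    (h𝒜 : 𝒜 ⊆ QD D) :
    Summable fun q : 𝒜 => 1 / (1 + (q.1.2.1 : ℝ) ^ 2) := by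
  have fst_mem_divisors (q : 𝒜) : q.1.1 ∈ (q.1.2.1 ^ 2 - D).divisors :=
    Int.mem_divisors.mpr ⟨fst_dvd_sq_sub (h𝒜 q.2), fun h => hDsq ⟨_, sub_eq_zero.mp h⟩⟩
  have toSigma_injective : Function.Injective fun q : 𝒜 =>
      (⟨q.1.2.1, q.1.1, fst_mem_divisors q⟩ : (b : ℤ) × (b ^ 2 - D).divisors) := fun q q' h => by
    have ha : q.1.1 = q'.1.1 :=
      congrArg (fun p : (b : ℤ) × (b ^ 2 - D).divisors => (p.2 : ℤ)) h
    have hb : q.1.2.1 = q'.1.2.1 := congrArg Sigma.fst h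
    exact Subtype.ext (eq_of_mem_QD_of_fst_eq_of_snd_eq hDsq (h𝒜 q.2) (h𝒜 q'.2) ha hb)
  simpa only [Function.comp_def] using
    (summable_sigma_divisors_sq_sub D).comp_injective toSigma_injective

end Majorant

section Psi

open MeasureTheory

variable {k : ℕ}

lemma intervalIntegrable_one_sub_rpow (a b : ℝ) {r : ℝ} (hr : -1 < r) :
    IntervalIntegrable (fun u : ℝ => (1 - u) ^ r) volume a b := by
  simpa only [sub_sub_cancel] using
    (intervalIntegral.intervalIntegrable_rpow' (a := 1 - a) (b := 1 - b) hr).comp_sub_left 1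

lemma intervalIntegrable_psi_integrand (hk : 2 ≤ k) (a b : ℝ) :
    IntervalIntegrable (fun u : ℝ => u ^ ((k : ℝ) - 3 / 2) * (1 - u) ^ (-(1 : ℝ) / 2))
      volume a b := by
  have two_le_k : (2 : ℝ) ≤ k := by exact_mod_cast hk
  refine (intervalIntegrable_one_sub_rpow a b (by norm_num)).continuousOn_mul ?_
  exact (Real.continuous_rpow_const (by linarith)).continuousOn

lemma continuous_psi (hk : 2 ≤ k) : Continuous (psi k) :=
  continuous_const.mul
    (intervalIntegral.continuous_primitive (intervalIntegrable_psi_integrand hk) 0)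

lemma psi_nonneg {v : ℝ} (hv0 : 0 ≤ v) (hv1 : v ≤ 1) : 0 ≤ psi k v := by
  refine mul_nonneg (by norm_num) (intervalIntegral.integral_nonneg hv0 fun u hu => ?_)
  exact mul_nonneg (Real.rpow_nonneg hu.1 _) (Real.rpow_nonneg (by linarith [hu.2]) _)

lemma integral_one_sub_rpow_neg_half_le {v : ℝ} (hv0 : 0 ≤ v) (hv1 : v ≤ 1) :
    ∫ u in (0 : ℝ)..v, (1 - u) ^ (-(1 : ℝ) / 2) ≤ 2 * v := by
  have integral_eq : ∫ u in (0 : ℝ)..v, (1 - u) ^ (-(1 : ℝ) / 2) = 2 * (1 - √(1 - v)) := by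
    rw [intervalIntegral.integral_comp_sub_left (fun u : ℝ => u ^ (-(1 : ℝ) / 2)) 1,
      integral_rpow (Or.inl (by norm_num)), Real.sqrt_eq_rpow]
    norm_num
    ring
  have le_sqrt : 1 - v ≤ √(1 - v) := Real.le_sqrt_of_sq_le (by nlinarith)
  linarith

lemma psi_le_rpow (hk : 2 ≤ k) {v : ℝ} (hv0 : 0 ≤ v) (hv1 : v ≤ 1) :
    psi k v ≤ v ^ ((k : ℝ) - 1 / 2) := by
  have two_le_k : (2 : ℝ) ≤ k := by exact_mod_cast hk
  have integral_le : ∫ u in (0 : ℝ)..v, u ^ ((k : ℝ) - 3 / 2) * (1 - u) ^ (-(1 : ℝ) / 2) ≤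
      ∫ u in (0 : ℝ)..v, v ^ ((k : ℝ) - 3 / 2) * (1 - u) ^ (-(1 : ℝ) / 2) := by
    refine intervalIntegral.integral_mono_on hv0 (intervalIntegrable_psi_integrand hk 0 v)
      ((intervalIntegrable_one_sub_rpow 0 v (by norm_num)).const_mul _) fun u hu => ?_
    refine mul_le_mul_of_nonneg_right ?_ (Real.rpow_nonneg (by linarith [hu.2]) _)
    exact Real.rpow_le_rpow hu.1 hu.2 (by linarith)
  calc psi k v
      ≤ 1 / 2 * (v ^ ((k : ℝ) - 3 / 2) * ∫ u in (0 : ℝ)..v, (1 - u) ^ (-(1 : ℝ) / 2)) := by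
        rw [← intervalIntegral.integral_const_mul]
        exact mul_le_mul_of_nonneg_left integral_le (by norm_num)
    _ ≤ 1 / 2 * (v ^ ((k : ℝ) - 3 / 2) * (2 * v)) := by
        gcongr
        exact integral_one_sub_rpow_neg_half_le hv0 hv1
    _ = v ^ ((k : ℝ) - 3 / 2) * v := by ring
    _ = v ^ ((k : ℝ) - 1 / 2) := by
        rw [← Real.rpow_add_one' hv0 (by linarith)]
        ring_nf

lemma psi_sq_le (hk : 2 ≤ k) {s : ℝ} (hs0 : 0 ≤ s) (hs1 : s ≤ 1) :
    psi k (s ^ 2) ≤ s ^ (2 * k - 1) := by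
  refine (psi_le_rpow hk (by positivity) (pow_le_one₀ hs0 hs1)).trans_eq ?_
  rw [← Real.rpow_natCast s 2, ← Real.rpow_mul hs0, ← Real.rpow_natCast]
  congr 1
  push_cast [show 1 ≤ 2 * k by lia]
  ring

end Psi

section Sign

open Filter Topology

lemma abs_sign_le_one (x : ℝ) : |Real.sign x| ≤ 1 := by
  rcases Real.sign_apply_eq x with h | h | h <;> simp [h]

lemma sign_mul_of_pos_right (x : ℝ) {y : ℝ} (hy : 0 < y) :
    Real.sign (x * y) = Real.sign x := by
  rcases lt_trichotomy x 0 with hx | rfl | hx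
  · rw [Real.sign_of_neg hx, Real.sign_of_neg (mul_neg_of_neg_of_pos hx hy)]
  · rw [zero_mul]
  · rw [Real.sign_of_pos hx, Real.sign_of_pos (mul_pos hx hy)]

lemma eventually_sign_eq {x : ℝ} (hx : x ≠ 0) : ∀ᶠ y in 𝓝 x, Real.sign y = Real.sign x := by
  rcases hx.lt_or_gt with hneg | hpos
  · filter_upwards [eventually_lt_nhds hneg] with y hy
    rw [Real.sign_of_neg hneg, Real.sign_of_neg hy]
  · filter_upwards [eventually_gt_nhds hpos] with y hy
    rw [Real.sign_of_pos hpos, Real.sign_of_pos hy]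

lemma tendsto_mul_add_mul_of_eventually_add_eq {ι R : Type*} [NormedRing R] {l : Filter ι}
    {s t f g : ι → R} {c z : R} (hs : IsBoundedUnder (· ≤ ·) l fun i => ‖s i‖)
    (hst : ∀ᶠ i in l, s i + t i = c) (hf : Tendsto f l (𝓝 z)) (hg : Tendsto g l (𝓝 z)) :
    Tendsto (fun i => s i * f i + t i * g i) l (𝓝 (c * z)) := by
  have sub_tendsto : Tendsto (fun i => f i - g i) l (𝓝 0) := by simpa using hf.sub hg
  have lim : Tendsto (fun i => s i * (f i - g i) + c * g i) l (𝓝 (c * z)) := by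
    simpa using (isBoundedUnder_le_mul_tendsto_zero hs sub_tendsto).add (hg.const_mul c)
  refine lim.congr' ?_
  filter_upwards [hst] with i hi
  rw [← hi]
  noncomm_ring

end Sign

section Summand

open Filter Topology

variable {k : ℕ} {D : ℤ} {q : ℤ × ℤ × ℤ} {τ : ℂ}

lemma Qval_re (q : ℤ × ℤ × ℤ) (τ : ℂ) : (Qval q τ).re = Qell q τ - 2 * q.1 * τ.im ^ 2 := by
  simp only [Qval, Qell, pow_two, Complex.normSq_apply, Complex.add_re, Complex.mul_re,
    Complex.mul_im, Complex.intCast_re, Complex.intCast_im, zero_mul, sub_zero]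
  ring

lemma Qval_im (q : ℤ × ℤ × ℤ) (τ : ℂ) : (Qval q τ).im = τ.im * (2 * q.1 * τ.re + q.2.1) := by
  simp only [Qval, pow_two, Complex.add_im, Complex.mul_re, Complex.mul_im, Complex.intCast_re,
    Complex.intCast_im, zero_mul, add_zero]
  ring

lemma continuous_Qval (q : ℤ × ℤ × ℤ) : Continuous (Qval q) := by
  unfold Qval
  fun_prop

lemma continuous_Qell (q : ℤ × ℤ × ℤ) : Continuous (Qell q) := by
  have := Complex.continuous_normSq
  unfold Qell
  fun_prop

lemma normSq_Qval (hq : q ∈ QD D) (τ : ℂ) :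
    Complex.normSq (Qval q τ) = Qell q τ ^ 2 + D * τ.im ^ 2 := by
  have disc_eq : (q.2.1 : ℝ) ^ 2 - 4 * q.1 * q.2.2 = D := by exact_mod_cast hq
  rw [Complex.normSq_apply, Qval_re, Qval_im, ← disc_eq, Qell, Complex.normSq_apply]
  ring

lemma mul_im_sq_le_normSq_Qval (hq : q ∈ QD D) (τ : ℂ) :
    D * τ.im ^ 2 ≤ Complex.normSq (Qval q τ) := by
  rw [normSq_Qval hq]
  exact le_add_of_nonneg_left (sq_nonneg _)

lemma normSq_Qval_pos (hD : 0 < D) (hq : q ∈ QD D) (hτ : 0 < τ.im) :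
    0 < Complex.normSq (Qval q τ) := by
  have D_pos : (0 : ℝ) < D := by exact_mod_cast hD
  exact (mul_pos D_pos (pow_pos hτ 2)).trans_le (mul_im_sq_le_normSq_Qval hq τ)

lemma fst_mul_im_sq_sq_le (hD : 0 ≤ D) (hq : q ∈ QD D) (τ : ℂ) :
    (q.1 * τ.im ^ 2) ^ 2 ≤ Complex.normSq (Qval q τ) := by
  have D_nonneg : (0 : ℝ) ≤ D := by exact_mod_cast hD
  have Qell_sq_le : Qell q τ ^ 2 ≤ Complex.normSq (Qval q τ) := by
    rw [normSq_Qval hq]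
    exact le_add_of_nonneg_right (mul_nonneg D_nonneg (sq_nonneg _))
  have re_sq_le : (Qell q τ - 2 * q.1 * τ.im ^ 2) ^ 2 ≤ Complex.normSq (Qval q τ) := by
    rw [← Qval_re, Complex.normSq_apply, sq]
    exact le_add_of_nonneg_right (mul_self_nonneg _)
  linarith [sq_nonneg (Qell q τ - q.1 * τ.im ^ 2)]

lemma snd_mul_im_sq_sq_le (hD : 0 ≤ D) (hq : q ∈ QD D) (τ : ℂ) :
    (q.2.1 * τ.im ^ 2) ^ 2 ≤ (2 * τ.im ^ 2 + 8 * τ.re ^ 2) * Complex.normSq (Qval q τ) := by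
  have im_sq_le : (Qval q τ).im ^ 2 ≤ Complex.normSq (Qval q τ) := by
    rw [Complex.normSq_apply, sq]
    exact le_add_of_nonneg_left (mul_self_nonneg _)
  calc (q.2.1 * τ.im ^ 2) ^ 2
      = (τ.im * (Qval q τ).im + -(2 * τ.re * (q.1 * τ.im ^ 2))) ^ 2 := by rw [Qval_im]; ring
    _ ≤ 2 * ((τ.im * (Qval q τ).im) ^ 2 + (-(2 * τ.re * (q.1 * τ.im ^ 2))) ^ 2) := add_sq_le
    _ = 2 * τ.im ^ 2 * (Qval q τ).im ^ 2 + 8 * τ.re ^ 2 * (q.1 * τ.im ^ 2) ^ 2 := by ring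
    _ ≤ 2 * τ.im ^ 2 * Complex.normSq (Qval q τ) + 8 * τ.re ^ 2 * Complex.normSq (Qval q τ) := by
        gcongr
        exact fst_mul_im_sq_sq_le hD hq τ
    _ = _ := by ring

lemma mul_im_sq_div_normSq_Qval_le (hD : 0 < D) (hq : q ∈ QD D) (hτ : 0 < τ.im) :
    D * τ.im ^ 2 / Complex.normSq (Qval q τ) ≤
      (1 + D * (2 * τ.im ^ 2 + 8 * τ.re ^ 2) / τ.im ^ 2) * (1 / (1 + (q.2.1 : ℝ) ^ 2)) := by
  have _ : (0 : ℝ) < D := by exact_mod_cast hD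
  rw [mul_one_div, div_le_div_iff₀ (normSq_Qval_pos hD hq hτ) (by positivity)]
  calc D * τ.im ^ 2 * (1 + (q.2.1 : ℝ) ^ 2)
      = D * τ.im ^ 2 + D * (q.2.1 * τ.im ^ 2) ^ 2 / τ.im ^ 2 := by field_simp
    _ ≤ Complex.normSq (Qval q τ) +
          D * ((2 * τ.im ^ 2 + 8 * τ.re ^ 2) * Complex.normSq (Qval q τ)) / τ.im ^ 2 := by
        gcongr
        · exact mul_im_sq_le_normSq_Qval hq τ
        · exact snd_mul_im_sq_sq_le hD.le hq τ
    _ = _ := by ring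

lemma pow_mul_psi_le (hk : 2 ≤ k) {m r : ℝ} (hm : 0 ≤ m) (hr : 0 < r) (hmr : m ≤ r) :
    r ^ (k - 1) * psi k ((m / r) ^ 2) ≤ m ^ (k - 1) * (m / r) ^ 2 := by
  have ratio_nonneg : 0 ≤ m / r := by positivity
  have ratio_le_one : m / r ≤ 1 := (div_le_one hr).mpr hmr
  calc r ^ (k - 1) * psi k ((m / r) ^ 2)
      ≤ r ^ (k - 1) * (m / r) ^ (2 * k - 1) := by
        gcongr
        exact psi_sq_le hk ratio_nonneg ratio_le_one
    _ = (r * (m / r)) ^ (k - 1) * (m / r) ^ k := by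
        rw [show 2 * k - 1 = (k - 1) + k by lia, pow_add, mul_pow, mul_assoc]
    _ = m ^ (k - 1) * (m / r) ^ k := by rw [mul_div_cancel₀ _ hr.ne']
    _ ≤ m ^ (k - 1) * (m / r) ^ 2 :=
        mul_le_mul_of_nonneg_left (pow_le_pow_of_le_one ratio_nonneg ratio_le_one hk)
          (by positivity)

lemma norm_Fsummand_le_mul_div (hk : 2 ≤ k) (hD : 0 < D) (hq : q ∈ QD D) (hτ : 0 < τ.im) :
    ‖Fsummand k D τ q‖ ≤
      (√D * τ.im) ^ (k - 1) * (D * τ.im ^ 2 / Complex.normSq (Qval q τ)) := by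
  have D_nonneg : (0 : ℝ) ≤ D := by exact_mod_cast hD.le
  have normSq_pos := normSq_Qval_pos hD hq hτ
  have norm_pos : 0 < ‖Qval q τ‖ := norm_pos_iff.mpr (Complex.normSq_pos.mp normSq_pos)
  have ratio_sq : D * τ.im ^ 2 / Complex.normSq (Qval q τ) = (√D * τ.im / ‖Qval q τ‖) ^ 2 := by
    rw [div_pow, mul_pow, Real.sq_sqrt D_nonneg, Complex.normSq_eq_norm_sq]
  have sqrt_mul_im_le : √D * τ.im ≤ ‖Qval q τ‖ := by
    refine le_of_sq_le_sq ?_ (norm_nonneg _)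
    rw [mul_pow, Real.sq_sqrt D_nonneg, ← Complex.normSq_eq_norm_sq]
    exact mul_im_sq_le_normSq_Qval hq τ
  have psi_arg_nonneg : 0 ≤ psi k (D * τ.im ^ 2 / Complex.normSq (Qval q τ)) :=
    psi_nonneg (by positivity) ((div_le_one normSq_pos).mpr (mul_im_sq_le_normSq_Qval hq τ))
  calc ‖Fsummand k D τ q‖
      = |Real.sign (Qell q τ)| *
          (‖Qval q τ‖ ^ (k - 1) * psi k (D * τ.im ^ 2 / Complex.normSq (Qval q τ))) := by
        rw [Fsummand, norm_mul, norm_mul, norm_pow, Complex.norm_real, Complex.norm_real,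
          Real.norm_of_nonneg psi_arg_nonneg, Real.norm_eq_abs, mul_assoc]
    _ ≤ ‖Qval q τ‖ ^ (k - 1) * psi k (D * τ.im ^ 2 / Complex.normSq (Qval q τ)) :=
        mul_le_of_le_one_left (by positivity) (abs_sign_le_one _)
    _ ≤ _ := by
        rw [ratio_sq]
        exact pow_mul_psi_le hk (by positivity) norm_pos sqrt_mul_im_le

lemma norm_Fsummand_le (hk : 2 ≤ k) (hD : 0 < D) (hq : q ∈ QD D) (hτ : 0 < τ.im) :
    ‖Fsummand k D τ q‖ ≤
      (√D * τ.im) ^ (k - 1) * (1 + D * (2 * τ.im ^ 2 + 8 * τ.re ^ 2) / τ.im ^ 2) *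
        (1 / (1 + (q.2.1 : ℝ) ^ 2)) := by
  refine (norm_Fsummand_le_mul_div hk hD hq hτ).trans ?_
  rw [mul_assoc]
  gcongr
  exact mul_im_sq_div_normSq_Qval_le hD hq hτ

lemma exists_eventually_norm_Fsummand_le (hk : 2 ≤ k) (hD : 0 < D) (hτ : 0 < τ.im) :
    ∃ C : ℝ, ∀ᶠ σ in 𝓝 τ, ∀ q ∈ QD D,
      ‖Fsummand k D σ q‖ ≤ C * (1 / (1 + (q.2.1 : ℝ) ^ 2)) := by
  let B : ℂ → ℝ := fun σ =>
    (√D * σ.im) ^ (k - 1) * (1 + D * (2 * σ.im ^ 2 + 8 * σ.re ^ 2) / σ.im ^ 2)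
  have B_continuousAt : ContinuousAt B τ := by
    have im_sq_ne_zero : τ.im ^ 2 ≠ 0 := (pow_pos hτ 2).ne'
    fun_prop
  have im_pos : ∀ᶠ σ in 𝓝 τ, 0 < σ.im :=
    Complex.continuous_im.continuousAt.eventually_const_lt hτ
  refine ⟨B τ + 1, ?_⟩
  filter_upwards [im_pos, B_continuousAt.eventually_lt_const (lt_add_one (B τ))] with σ hσ hB q hq
  exact (norm_Fsummand_le hk hD hq hσ).trans (by gcongr)

lemma summable_Fsummand (hk : 2 ≤ k) (hD : 0 < D) (hDsq : ¬∃ m : ℤ, m ^ 2 = D)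
    {𝒜 : Set (ℤ × ℤ × ℤ)} (h𝒜 : 𝒜 ⊆ QD D) (hτ : 0 < τ.im) :
    Summable fun q : 𝒜 => Fsummand k D τ q :=
  Summable.of_norm_bounded ((summable_one_div_one_add_sq_of_subset_QD hDsq h𝒜).mul_left _)
    fun q => norm_Fsummand_le hk hD (h𝒜 q.2) hτ

lemma continuousAt_Qval_pow_mul_psi (hk : 2 ≤ k) (hD : 0 < D) (hq : q ∈ QD D) (hτ : 0 < τ.im) :
    ContinuousAt (fun σ : ℂ => Qval q σ ^ (k - 1) *
      ((psi k ((D : ℝ) * σ.im ^ 2 / Complex.normSq (Qval q σ)) : ℝ) : ℂ)) τ := by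
  have psi_arg_continuousAt :
      ContinuousAt (fun σ : ℂ => (D : ℝ) * σ.im ^ 2 / Complex.normSq (Qval q σ)) τ :=
    ContinuousAt.div (by fun_prop)
      (Complex.continuous_normSq.comp (continuous_Qval q)).continuousAt
      (normSq_Qval_pos hD hq hτ).ne'
  exact ((continuous_Qval q).continuousAt.pow _).mul <|
    Complex.continuous_ofReal.continuousAt.comp <|
      (continuous_psi hk).continuousAt.comp psi_arg_continuousAt

end Summand

section VerticalLimit

open Filter Topology

variable {k : ℕ} {D : ℤ} {q : ℤ × ℤ × ℤ} {τ : ℂ}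

lemma tendsto_add_mul_I (τ : ℂ) :
    Tendsto (fun w : ℝ => τ + (w : ℂ) * Complex.I) (𝓝[>] 0) (𝓝 τ) := by
  have cont : Continuous fun w : ℝ => τ + (w : ℂ) * Complex.I := by fun_prop
  exact tendsto_nhdsWithin_of_tendsto_nhds (by simpa using cont.tendsto 0)

lemma tendsto_sub_mul_I (τ : ℂ) :
    Tendsto (fun w : ℝ => τ - (w : ℂ) * Complex.I) (𝓝[>] 0) (𝓝 τ) := by
  have cont : Continuous fun w : ℝ => τ - (w : ℂ) * Complex.I := by fun_prop
  exact tendsto_nhdsWithin_of_tendsto_nhds (by simpa using cont.tendsto 0)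

lemma Qell_add_mul_I (q : ℤ × ℤ × ℤ) (τ : ℂ) (w : ℝ) :
    Qell q (τ + (w : ℂ) * Complex.I) = Qell q τ + q.1 * (w * (2 * τ.im + w)) := by
  simp only [Qell, Complex.normSq_apply, Complex.add_re, Complex.add_im, Complex.mul_re,
    Complex.mul_im, Complex.ofReal_re, Complex.ofReal_im, Complex.I_re, Complex.I_im, mul_zero,
    mul_one, sub_self, add_zero]
  ring

lemma Qell_sub_mul_I (q : ℤ × ℤ × ℤ) (τ : ℂ) (w : ℝ) :
    Qell q (τ - (w : ℂ) * Complex.I) = Qell q τ - q.1 * (w * (2 * τ.im - w)) := by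
  simp only [Qell, Complex.normSq_apply, Complex.sub_re, Complex.sub_im, Complex.mul_re,
    Complex.mul_im, Complex.ofReal_re, Complex.ofReal_im, Complex.I_re, Complex.I_im, mul_zero,
    mul_one, sub_self, sub_zero, add_zero]
  ring

lemma eventually_sign_Qell_add_sign_Qell (q : ℤ × ℤ × ℤ) (hτ : 0 < τ.im) :
    ∀ᶠ w : ℝ in 𝓝[>] 0, Real.sign (Qell q (τ + (w : ℂ) * Complex.I)) +
      Real.sign (Qell q (τ - (w : ℂ) * Complex.I)) = 2 * Real.sign (Qell q τ) := by
  rcases eq_or_ne (Qell q τ) 0 with hzero | hne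
  · filter_upwards [Ioo_mem_nhdsGT hτ] with w ⟨w_pos, w_lt⟩
    have upper_pos : 0 < w * (2 * τ.im + w) := by positivity
    have lower_pos : 0 < w * (2 * τ.im - w) := mul_pos w_pos (by linarith)
    rw [Qell_add_mul_I, Qell_sub_mul_I, hzero, zero_add, zero_sub, Real.sign_neg,
      sign_mul_of_pos_right _ upper_pos, sign_mul_of_pos_right _ lower_pos, Real.sign_zero,
      mul_zero, add_neg_cancel]
  · have sign_eq : ∀ᶠ σ in 𝓝 τ, Real.sign (Qell q σ) = Real.sign (Qell q τ) :=
      (continuous_Qell q).continuousAt.eventually (eventually_sign_eq hne)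
    filter_upwards [(tendsto_add_mul_I τ).eventually sign_eq,
      (tendsto_sub_mul_I τ).eventually sign_eq] with w h_add h_sub
    rw [h_add, h_sub, two_mul]

lemma tendsto_Fsummand_add_Fsummand (hk : 2 ≤ k) (hD : 0 < D) (hq : q ∈ QD D) (hτ : 0 < τ.im) :
    Tendsto (fun w : ℝ => Fsummand k D (τ + (w : ℂ) * Complex.I) q +
      Fsummand k D (τ - (w : ℂ) * Complex.I) q) (𝓝[>] 0) (𝓝 (2 * Fsummand k D τ q)) := by
  have cont := continuousAt_Qval_pow_mul_psi hk hD hq hτ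
  have sign_bounded : IsBoundedUnder (· ≤ ·) (𝓝[>] 0) fun w : ℝ =>
      ‖((Real.sign (Qell q (τ + (w : ℂ) * Complex.I)) : ℝ) : ℂ)‖ :=
    isBoundedUnder_of ⟨1, fun w => (Complex.norm_real _).trans_le (abs_sign_le_one _)⟩
  have sign_add : ∀ᶠ w : ℝ in 𝓝[>] 0,
      ((Real.sign (Qell q (τ + (w : ℂ) * Complex.I)) : ℝ) : ℂ) +
        ((Real.sign (Qell q (τ - (w : ℂ) * Complex.I)) : ℝ) : ℂ) =
          2 * ((Real.sign (Qell q τ) : ℝ) : ℂ) :=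
    (eventually_sign_Qell_add_sign_Qell q hτ).mono fun w hw => by exact_mod_cast hw
  simpa only [Fsummand, mul_assoc, Function.comp_def] using
    tendsto_mul_add_mul_of_eventually_add_eq sign_bounded sign_add
      (cont.tendsto.comp (tendsto_add_mul_I τ)) (cont.tendsto.comp (tendsto_sub_mul_I τ))

lemma tendsto_tsum_Fsummand_add_Fsummand (hk : 2 ≤ k) (hD : 0 < D)
    (hDsq : ¬∃ m : ℤ, m ^ 2 = D) {𝒜 : Set (ℤ × ℤ × ℤ)} (h𝒜 : 𝒜 ⊆ QD D) (hτ : 0 < τ.im) :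
    Tendsto (fun w : ℝ => ∑' q : 𝒜, (Fsummand k D (τ + (w : ℂ) * Complex.I) q +
      Fsummand k D (τ - (w : ℂ) * Complex.I) q)) (𝓝[>] 0)
        (𝓝 (∑' q : 𝒜, 2 * Fsummand k D τ q)) := by
  obtain ⟨C, hC⟩ := exists_eventually_norm_Fsummand_le hk hD hτ
  have majorant_summable := (summable_one_div_one_add_sq_of_subset_QD hDsq h𝒜).mul_left C
  refine tendsto_tsum_of_dominated_convergence (majorant_summable.add majorant_summable)
    (fun q => tendsto_Fsummand_add_Fsummand hk hD (h𝒜 q.2) hτ) ?_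
  filter_upwards [(tendsto_add_mul_I τ).eventually hC, (tendsto_sub_mul_I τ).eventually hC]
    with w h_add h_sub q
  exact norm_add_le_of_le (h_add q (h𝒜 q.2)) (h_sub q (h𝒜 q.2))

theorem stmt3_general (hk : 2 ≤ k) (hD : 0 < D) (hDsq : ¬∃ m : ℤ, m ^ 2 = D)
    {𝒜 : Set (ℤ × ℤ × ℤ)} (h𝒜 : 𝒜 ⊆ QD D) (hτ : 0 < τ.im) :
    Tendsto (fun w : ℝ => FA k D 𝒜 (τ + (w : ℂ) * Complex.I) + FA k D 𝒜 (τ - (w : ℂ) * Complex.I))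
      (𝓝[>] 0) (𝓝 (2 * FA k D 𝒜 τ)) := by
  have im_pos : ∀ᶠ σ in 𝓝 τ, 0 < σ.im :=
    Complex.continuous_im.continuousAt.eventually_const_lt hτ
  have lim := tendsto_tsum_Fsummand_add_Fsummand hk hD hDsq h𝒜 hτ
  rw [tsum_mul_left] at lim
  unfold FA
  rw [mul_left_comm]
  refine (lim.const_mul _).congr' ?_
  filter_upwards [(tendsto_add_mul_I τ).eventually im_pos,
    (tendsto_sub_mul_I τ).eventually im_pos] with w h_add h_sub
  rw [(summable_Fsummand hk hD hDsq h𝒜 h_add).tsum_add (summable_Fsummand hk hD hDsq h𝒜 h_sub),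
    mul_add]

end VerticalLimit

theorem stmt3 (k : ℕ) (hk : 2 ≤ k) (D : ℤ) (hD : 0 < D)
    (hD4 : D % 4 = 0 ∨ D % 4 = 1) (hDsq : ¬∃ m : ℤ, m ^ 2 = D)
    (𝒜 : Set (ℤ × ℤ × ℤ)) (h𝒜 : IsNarrowClass D 𝒜)
    (τ : ℂ) (hτ : 0 < τ.im) (hτE : ∃ q ∈ QD D, Qell q τ = 0) :
    Filter.Tendsto
      (fun w : ℝ => FA k D 𝒜 (τ + (w : ℂ) * Complex.I) + FA k D 𝒜 (τ - (w : ℂ) * Complex.I))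
      (nhdsWithin 0 (Set.Ioi 0)) (nhds (2 * FA k D 𝒜 τ)) :=
  stmt3_general hk hD hDsq h𝒜.subset_QD hτ
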